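/- Let n ∈ ℕ, p⃗, q⃗ = (q_1,…,q_n) ∈ [1,∞]^n and α⃗ = (α_1,…,α_n) ∈ ℝⁿ with α_i ∈ (-1/q_i, 1 - 1/q_i) for every i ∈ {1,…,n}. Then the mixed-norm Herz space Ė^{α⃗,p⃗}_{q⃗}(ℝⁿ) is a ball Banach function space; in particular, its norm satisfies the triangle inequality ‖f+g‖ ≤ ‖f‖ + ‖g‖, and for every ball B ⊂ ℝⁿ there exists a positive constant C_B such that ∫_B |f(x)| dx ≤ C_B ‖f‖_{Ė^{α⃗,p⃗}_{q⃗}(ℝⁿ)} for all f ∈ Ė^{α⃗,p⃗}_{q⃗}(ℝⁿ). -/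

import Mathlib

open MeasureTheory ENNReal Filter

noncomputable section

/-- The dyadic annulus `R_k = (-2^k, 2^k) \ (-2^(k-1), 2^(k-1))` in `ℝ`. -/
def herzRing (k : ℤ) : Set ℝ :=
  Set.Ioo (-(2 : ℝ) ^ k) ((2 : ℝ) ^ k) \ Set.Ioo (-(2 : ℝ) ^ (k - 1)) ((2 : ℝ) ^ (k - 1))

/-- The `L^q` "norm" (valued in `ℝ≥0∞`) of an `ℝ≥0∞`-valued function on a set `s ⊆ ℝ`,
with the usual modification when `q = ∞`. -/
def lqNormOn (q : ℝ≥0∞) (s : Set ℝ) (g : ℝ → ℝ≥0∞) : ℝ≥0∞ :=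
  if q = ∞ then essSup (s.indicator g) volume
  else (∫⁻ x in s, g x ^ q.toReal) ^ (1 / q.toReal)

/-- The `l^p` norm over `ℤ` of an `ℝ≥0∞`-valued sequence, with the usual modification
when `p = ∞`. -/
def lpZNorm (p : ℝ≥0∞) (a : ℤ → ℝ≥0∞) : ℝ≥0∞ :=
  if p = ∞ then ⨆ k, a k
  else (∑' k : ℤ, a k ^ p.toReal) ^ (1 / p.toReal)

/-- The one-dimensional Herz norm `K^{α,p}_q` of an `ℝ≥0∞`-valued function on `ℝ`. -/
def herzNorm1 (α : ℝ) (p q : ℝ≥0∞) (g : ℝ → ℝ≥0∞) : ℝ≥0∞ :=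
  lpZNorm p fun k => ENNReal.ofReal ((2 : ℝ) ^ ((k : ℝ) * α)) * lqNormOn q (herzRing k) g

/-- The mixed-norm Herz norm on `ℝⁿ` of an `ℝ≥0∞`-valued function: the Herz norm
`K^{α_1,p_1}_{q_1}` is applied in the first variable, then `K^{α_2,p_2}_{q_2}` in the
second variable, …, and finally `K^{α_n,p_n}_{q_n}` in the last variable. -/
def mixedHerzNormE : (n : ℕ) → (Fin n → ℝ) → (Fin n → ℝ≥0∞) → (Fin n → ℝ≥0∞) →
    ((Fin n → ℝ) → ℝ≥0∞) → ℝ≥0∞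
  | 0, _, _, _, f => f fun i => i.elim0
  | n + 1, α, p, q, f =>
    herzNorm1 (α (Fin.last n)) (p (Fin.last n)) (q (Fin.last n)) fun xlast =>
      mixedHerzNormE n (Fin.init α) (Fin.init p) (Fin.init q) fun y => f (Fin.snoc y xlast)

/-- The mixed-norm Herz norm `‖f‖_{Ė^{α,p}_q(ℝⁿ)}` of a complex-valued function on `ℝⁿ`. -/
def herzNormC (n : ℕ) (α : Fin n → ℝ) (p q : Fin n → ℝ≥0∞) (f : (Fin n → ℝ) → ℂ) : ℝ≥0∞ :=
  mixedHerzNormE n α p q fun x => (‖f x‖₊ : ℝ≥0∞)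

/-- `I_m = (-2^m, -2^{-m}] ∪ [2^{-m}, 2^m)`. -/
def herzI (m : ℕ) : Set ℝ :=
  Set.Ioc (-(2 : ℝ) ^ (m : ℤ)) (-(2 : ℝ) ^ (-(m : ℤ))) ∪
    Set.Ico ((2 : ℝ) ^ (-(m : ℤ))) ((2 : ℝ) ^ (m : ℤ))

/-- `A_m = I_m^n ⊆ ℝⁿ`. -/
def herzA (n m : ℕ) : Set (Fin n → ℝ) := Set.univ.pi fun _ => herzI m

/-- The class `H(ℝⁿ)` of simple functions built from finitely many pairwise disjoint
parallelepipeds contained in some `A_m`. -/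
def IsHSimple (n : ℕ) (f : (Fin n → ℝ) → ℂ) : Prop :=
  ∃ (m N : ℕ) (a : Fin N → ℂ) (E : Fin N → Fin n → Set ℝ),
    (∀ k i, MeasurableSet (E k i)) ∧
    (∀ k, Set.univ.pi (E k) ⊆ herzA n m) ∧
    (Pairwise fun k l => Disjoint (Set.univ.pi (E k)) (Set.univ.pi (E l))) ∧
    f = fun x => ∑ k, (Set.univ.pi (E k)).indicator (fun _ => a k) x

/-- The Euclidean ball `B(x,r)` in `ℝⁿ`. -/
def eucBall (n : ℕ) (x : Fin n → ℝ) (r : ℝ) : Set (Fin n → ℝ) :=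
  {y | ∑ i, (y i - x i) ^ 2 < r ^ 2}

/-- The (uncentered) maximal operator in the `k`-th variable. -/
def maxVar (n : ℕ) (k : Fin n) (g : (Fin n → ℝ) → ℝ≥0∞) : (Fin n → ℝ) → ℝ≥0∞ :=
  fun x => ⨆ (a : ℝ) (b : ℝ) (_ : x k ∈ Set.Ioo a b),
    (volume (Set.Ioo a b))⁻¹ * ∫⁻ y in Set.Ioo a b, g (Function.update x k y)

/-- The centered Hardy–Littlewood maximal operator on `ℝⁿ`. -/
def centeredMax (n : ℕ) (g : (Fin n → ℝ) → ℝ≥0∞) : (Fin n → ℝ) → ℝ≥0∞ :=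
  fun x => ⨆ (r : ℝ) (_ : 0 < r),
    (volume (eucBall n x r))⁻¹ * ∫⁻ y in eucBall n x r, g y

/-- The composition `M_n ∘ ⋯ ∘ M_1` of the maximal operators in each variable. -/
def iteratedMax (n : ℕ) (g : (Fin n → ℝ) → ℝ≥0∞) : (Fin n → ℝ) → ℝ≥0∞ :=
  (List.ofFn fun k : Fin n => maxVar n k).foldl (fun h F => F h) g

/-- The iterated maximal operator `ℳ_t(f) = [M_n ⋯ M_1(|f|^t)]^{1/t}`. -/
def iterMaxPow (n : ℕ) (t : ℝ) (f : (Fin n → ℝ) → ℂ) : (Fin n → ℝ) → ℝ≥0∞ :=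
  fun x => iteratedMax n (fun y => (‖f y‖₊ : ℝ≥0∞) ^ t) x ^ (1 / t)

/-- The `l^r`-Herz type mixed norm of a sequence of functions on `ℝⁿ`. -/
def herzSeqNorm (n : ℕ) (r : ℝ≥0∞) (α : Fin n → ℝ) (p q : Fin n → ℝ≥0∞)
    (F : ℤ → (Fin n → ℝ) → ℂ) : ℝ≥0∞ :=
  mixedHerzNormE n α p q fun x => lpZNorm r fun j => (‖F j x‖₊ : ℝ≥0∞)

/-- `N` is a ball quasi-Banach function norm on (nonnegative extended-real-valued)
measurable functions on `ℝⁿ`. -/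
def IsBQBFNorm (n : ℕ) (N : ((Fin n → ℝ) → ℝ≥0∞) → ℝ≥0∞) : Prop :=
  (∀ f : (Fin n → ℝ) → ℝ≥0∞, Measurable f → N f = 0 → f =ᵐ[volume] 0) ∧
  (∀ f g : (Fin n → ℝ) → ℝ≥0∞, Measurable f → Measurable g →
    (∀ᵐ x ∂volume, g x ≤ f x) → N g ≤ N f) ∧
  (∀ (fm : ℕ → (Fin n → ℝ) → ℝ≥0∞) (f : (Fin n → ℝ) → ℝ≥0∞),
    (∀ m, Measurable (fm m)) → Measurable f →
    (∀ᵐ x ∂volume, Monotone (fun m => fm m x) ∧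
      Tendsto (fun m => fm m x) atTop (nhds (f x))) →
    Monotone (fun m => N (fm m)) ∧ Tendsto (fun m => N (fm m)) atTop (nhds (N f))) ∧
  (∀ (x : Fin n → ℝ) (r : ℝ), 0 < r →
    N ((eucBall n x r).indicator fun _ => (1 : ℝ≥0∞)) ≠ ∞)

/-- `N` is a ball Banach function norm: a ball quasi-Banach function norm that moreover
satisfies the triangle inequality and locally dominates the `L¹` norm. -/
def IsBallBanachNorm (n : ℕ) (N : ((Fin n → ℝ) → ℝ≥0∞) → ℝ≥0∞) : Prop :=
  IsBQBFNorm n N ∧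
  (∀ f g : (Fin n → ℝ) → ℝ≥0∞, Measurable f → Measurable g → N (f + g) ≤ N f + N g) ∧
  (∀ (x : Fin n → ℝ) (r : ℝ), 0 < r → ∃ C : ℝ≥0∞, 0 < C ∧ C ≠ ∞ ∧
    ∀ f : (Fin n → ℝ) → ℝ≥0∞, Measurable f → (∫⁻ y in eucBall n x r, f y) ≤ C * N f)

/-- The associate (Köthe dual) norm of a function norm `N`. -/
def assocNormOf (n : ℕ) (N : ((Fin n → ℝ) → ℝ≥0∞) → ℝ≥0∞)
    (f : (Fin n → ℝ) → ℝ≥0∞) : ℝ≥0∞ :=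
  ⨆ (g : (Fin n → ℝ) → ℝ≥0∞) (_ : Measurable g) (_ : N g = 1), ∫⁻ x, f x * g x

/-- The `θ`-convexification of a function norm: `‖f‖_{X^θ} = ‖|f|^θ‖_X^{1/θ}`
(here stated with `θ` in place of `1/p`, so `X^{1/p}` is `convexPow n (1/p) N`). -/
def convexPow (n : ℕ) (θ : ℝ) (N : ((Fin n → ℝ) → ℝ≥0∞) → ℝ≥0∞)
    (f : (Fin n → ℝ) → ℝ≥0∞) : ℝ≥0∞ :=
  N (fun x => f x ^ θ) ^ (1 / θ)

/-- The associate space norm of the mixed-norm Herz space, for complex-valued functions. -/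
def herzAssocNormC (n : ℕ) (α : Fin n → ℝ) (p q : Fin n → ℝ≥0∞)
    (f : (Fin n → ℝ) → ℂ) : ℝ≥0∞ :=
  ⨆ (g : (Fin n → ℝ) → ℂ) (_ : Measurable g) (_ : herzNormC n α p q g = 1),
    ∫⁻ x, (‖f x * g x‖₊ : ℝ≥0∞)

structure GoodNorm {X : Type} [MeasurableSpace X] (μ : Measure X)
    (N : (X → ℝ≥0∞) → ℝ≥0∞) : Prop where
  meas : ∀ (β : Type) [MeasurableSpace β] (F : β × X → ℝ≥0∞), Measurable F →
    Measurable fun b => N fun x => F (b, x)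
  zero : ∀ f, Measurable f → (N f = 0 ↔ f =ᵐ[μ] 0)
  mono : ∀ f g, (∀ᵐ x ∂μ, g x ≤ f x) → N g ≤ N f
  sup : ∀ f : ℕ → X → ℝ≥0∞, (∀ m, Measurable (f m)) → Monotone f →
    N (fun x => ⨆ m, f m x) = ⨆ m, N (f m)
  add : ∀ f g, Measurable f → Measurable g → N (f + g) ≤ N f + N g

lemma essSup_meas {X β : Type} [MeasurableSpace X] [MeasurableSpace β] (μ : Measure X)
    [SFinite μ] (F : β × X → ℝ≥0∞) (hF : Measurable F) :
    Measurable fun b => essSup (fun x => F (b, x)) μ := by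
  refine measurable_of_Iic fun c => ?_
  have : (fun b => essSup (fun x => F (b, x)) μ) ⁻¹' Set.Iic c
      = {b | μ (Prod.mk b ⁻¹' {z | c < F z}) = 0} := by
    ext b
    simp only [Set.mem_preimage, Set.mem_Iic, Set.mem_ofPred_eq, Set.preimage_ofPred_eq]
    constructor
    · intro h
      have := ENNReal.ae_le_essSup (μ := μ) (fun x => F (b, x))
      have h2 : ∀ᵐ x ∂μ, F (b, x) ≤ c := this.mono fun x hx => hx.trans h
      simpa [ae_iff, not_le] using h2
    · intro h
      refine essSup_le_of_ae_le c ?_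
      have h2 : ∀ᵐ x ∂μ, F (b, x) ≤ c := by simpa [ae_iff, not_le] using h
      exact h2
  rw [this]
  exact measurable_measure_prodMk_left (measurableSet_lt measurable_const hF)
    (measurableSet_singleton 0)

lemma eLp_fin {X : Type} [MeasurableSpace X] (μ : Measure X) {q : ℝ≥0∞} (hq : 1 ≤ q)
    (h : q ≠ ∞) (f : X → ℝ≥0∞) :
    eLpNorm f q μ = (∫⁻ x, f x ^ q.toReal ∂μ) ^ (1 / q.toReal) := by
  rw [eLpNorm_eq_lintegral_rpow_enorm_toReal (by positivity) h]; rfl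

lemma eLp_top {X : Type} [MeasurableSpace X] (μ : Measure X) (f : X → ℝ≥0∞) :
    eLpNorm f ∞ μ = essSup f μ := by
  rw [eLpNorm_exponent_top]; rfl

lemma rpow_iSup' (a : ℕ → ℝ≥0∞) {t : ℝ} (ht : 0 < t) : (⨆ m, a m) ^ t = ⨆ m, a m ^ t :=
  (ENNReal.orderIsoRpow t ht).map_iSup a

lemma goodNorm_eLp {X : Type} [MeasurableSpace X] (μ : Measure X) [SFinite μ]
    {q : ℝ≥0∞} (hq : 1 ≤ q) : GoodNorm μ (fun f => eLpNorm f q μ) where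
  meas β _ F hF := by
    rcases eq_or_ne q ∞ with rfl | h
    · simp only [eLp_top]
      exact essSup_meas μ F hF
    · simp only [eLp_fin μ hq h]
      exact ((hF.pow_const _).lintegral_prod_right' ).pow_const _
  zero f hf := eLpNorm_eq_zero_iff hf.aestronglyMeasurable (by positivity)
  mono f g h := eLpNorm_mono_enorm_ae h
  sup f hf hm := by
    rcases eq_or_ne q ∞ with rfl | h
    · simp only [eLp_top]
      apply le_antisymm
      · refine essSup_le_of_ae_le _ ?_
        have : ∀ᵐ x ∂μ, ∀ m, f m x ≤ essSup (f m) μ := ae_all_iff.2 fun m => ENNReal.ae_le_essSup _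
        exact this.mono fun x hx => iSup_mono hx
      · exact iSup_le fun m => essSup_mono_ae (ae_of_all _ fun x => le_iSup (fun m => f m x) m)
    · have hq0 : 0 < q.toReal := ENNReal.toReal_pos (by positivity) h
      simp only [eLp_fin μ hq h, rpow_iSup' _ hq0]
      rw [lintegral_iSup (fun m => (hf m).pow_const _), rpow_iSup' _ (by positivity)]
      intro m m' hmm x
      exact ENNReal.rpow_le_rpow (hm hmm x) hq0.le
  add f g hf hg := eLpNorm_add_le hf.aestronglyMeasurable hg.aestronglyMeasurable hq

lemma measurableSet_herzRing (k : ℤ) : MeasurableSet (herzRing k) :=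
  measurableSet_Ioo.diff measurableSet_Ioo

lemma mem_herzRing (k : ℤ) (x : ℝ) : x ∈ herzRing k ↔ |x| < 2 ^ k ∧ (2 : ℝ) ^ (k - 1) ≤ |x| := by
  rw [herzRing, Set.mem_sdiff, Set.mem_Ioo, Set.mem_Ioo, ← abs_lt, ← abs_lt, not_lt]

lemma exists_herzRing {x : ℝ} (hx : x ≠ 0) : ∃ k, x ∈ herzRing k := by
  obtain ⟨n, h1, h2⟩ := exists_mem_Ico_zpow (abs_pos.2 hx) (one_lt_two)
  exact ⟨n + 1, (mem_herzRing _ _).2 ⟨h2, by simpa using h1⟩⟩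

lemma lqNormOn_eq {q : ℝ≥0∞} (hq : 1 ≤ q) (k : ℤ) (g : ℝ → ℝ≥0∞) :
    lqNormOn q (herzRing k) g = eLpNorm g q (volume.restrict (herzRing k)) := by
  unfold lqNormOn
  split_ifs with h
  · rw [h, eLp_top, essSup_indicator_eq_essSup_restrict (measurableSet_herzRing k)]
  · rw [eLp_fin _ hq h]

lemma lpZNorm_eq {p : ℝ≥0∞} (hp : 1 ≤ p) (a : ℤ → ℝ≥0∞) :
    lpZNorm p a = eLpNorm a p Measure.count := by
  unfold lpZNorm
  split_ifs with h
  · rw [h, eLp_top, essSup_count]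
  · rw [eLp_fin _ hp h, lintegral_count]

def hw (α : ℝ) (k : ℤ) : ℝ≥0∞ := ENNReal.ofReal ((2 : ℝ) ^ ((k : ℝ) * α))

lemma hw_ne_zero (α : ℝ) (k : ℤ) : hw α k ≠ 0 := by
  unfold hw
  have : (0:ℝ) < (2 : ℝ) ^ ((k : ℝ) * α) := by positivity
  simpa using this

lemma hw_ne_top (α : ℝ) (k : ℤ) : hw α k ≠ ∞ := ENNReal.ofReal_ne_top

lemma herz_eq {p q : ℝ≥0∞} (hp : 1 ≤ p) (hq : 1 ≤ q) (α : ℝ) (g : ℝ → ℝ≥0∞) :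
    herzNorm1 α p q g = eLpNorm (fun k : ℤ => hw α k *
      eLpNorm g q (volume.restrict (herzRing k))) p Measure.count := by
  unfold herzNorm1
  simp only [lqNormOn_eq hq, lpZNorm_eq hp]
  rfl

lemma ae_rings {P : ℝ → Prop} (h : ∀ k, ∀ᵐ x ∂(volume.restrict (herzRing k)), P x) :
    ∀ᵐ x, P x := by
  have h1 : ∀ᵐ x : ℝ, ∀ k, x ∈ herzRing k → P x :=
    ae_all_iff.2 fun k => (ae_restrict_iff' (measurableSet_herzRing k)).1 (h k)
  have h2 : ∀ᵐ x : ℝ, x ≠ 0 := by simp [ae_iff]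
  filter_upwards [h1, h2] with x hx h0
  obtain ⟨k, hk⟩ := exists_herzRing h0
  exact hx k hk

lemma goodNorm_herz {p q : ℝ≥0∞} (hp : 1 ≤ p) (hq : 1 ≤ q) (α : ℝ) :
    GoodNorm volume (herzNorm1 α p q) := by
  have G := fun k => goodNorm_eLp (volume.restrict (herzRing k)) hq
  have L := goodNorm_eLp (Measure.count : Measure ℤ) hp
  have e : herzNorm1 α p q = fun g => _ := funext fun g => herz_eq hp hq α g
  rw [e]
  refine ⟨?_, ?_, ?_, ?_, ?_⟩
  · intro β _ F hF
    refine L.meas β (fun z => hw α z.2 *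
      eLpNorm (fun x => F (z.1, x)) q (volume.restrict (herzRing z.2))) ?_
    refine measurable_from_prod_countable_left fun k => ?_
    exact ((G k).meas β F hF).const_mul (hw α k)
  · intro f hf
    rw [L.zero _ (measurable_of_countable _)]
    constructor
    · intro h
      refine ae_rings fun k => ?_
      have : hw α k * eLpNorm f q (volume.restrict (herzRing k)) = 0 := by
        have := (Measure.ae_count_iff).1 h k
        exact this
      exact ((G k).zero f hf).1 ((mul_eq_zero.1 this).resolve_left (hw_ne_zero α k))
    · intro h
      refine ae_of_all _ fun k => ?_
      have := ((G k).zero f hf).2 (ae_restrict_of_ae h)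
      simp only [this, mul_zero, Pi.zero_apply]
  · intro f g h
    refine L.mono _ _ (ae_of_all _ fun k => ?_)
    exact mul_le_mul_right ((G k).mono f g (ae_restrict_of_ae h)) _
  · intro f hf hm
    rw [← L.sup _ (fun _ => measurable_of_countable _)]
    · congr 1
      funext k
      rw [(G k).sup f hf hm, ENNReal.mul_iSup]
    · intro m m' h k
      exact mul_le_mul_right ((G k).mono _ _ (ae_of_all _ (hm h))) _
  · intro f g hf hg
    refine le_trans (L.mono _ _ (ae_of_all _ fun k => ?_))
      (L.add _ _ (measurable_of_countable _) (measurable_of_countable _))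
    simp only [Pi.add_apply, ← mul_add]
    exact mul_le_mul_right ((G k).add f g hf hg) _

def snocMap (n : ℕ) (z : ℝ × (Fin n → ℝ)) : Fin (n + 1) → ℝ := Fin.snoc z.2 z.1

lemma snocMap_mp (n : ℕ) : MeasurePreserving (snocMap n) (volume.prod volume) volume := by
  have h := (volume_preserving_piFinSuccAbove (fun _ : Fin (n + 1) => ℝ) (Fin.last n)).symm
  have e : snocMap n = (MeasurableEquiv.piFinSuccAbove (fun _ => ℝ) (Fin.last n)).symm := by
    funext z
    simp [snocMap, MeasurableEquiv.piFinSuccAbove_symm_apply, Fin.insertNthEquiv,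
      Fin.insertNth_last']
  rw [e]
  exact h

lemma goodNorm_mixed : ∀ (n : ℕ) (α : Fin n → ℝ) (p q : Fin n → ℝ≥0∞)
    (_ : ∀ i, 1 ≤ p i) (_ : ∀ i, 1 ≤ q i), GoodNorm volume (mixedHerzNormE n α p q)
  | 0, α, p, q, _, _ => by
    have key : ∀ P : (Fin 0 → ℝ) → Prop, (∀ᵐ x, P x) ↔ P (fun i => i.elim0) := by
      intro P
      constructor
      · intro h
        obtain ⟨x, hx⟩ := h.exists
        rwa [Subsingleton.elim (fun i : Fin 0 => i.elim0) x]
      · intro h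
        refine ae_of_all _ fun x => ?_
        rwa [Subsingleton.elim x (fun i : Fin 0 => i.elim0)]
    refine ⟨?_, ?_, ?_, ?_, ?_⟩
    · intro β _ F hF
      exact hF.comp (measurable_id.prodMk measurable_const)
    · intro f _
      exact (key (fun x => f x = 0)).symm
    · intro f g h
      exact (key _).1 h
    · intro f _ _
      rfl
    · intro f g _ _
      exact le_rfl
  | n + 1, α, p, q, hp, hq => by
    have I := goodNorm_mixed n (Fin.init α) (Fin.init p) (Fin.init q)
      (fun i => hp _) (fun i => hq _)
    have H := goodNorm_herz (hp (Fin.last n)) (hq (Fin.last n)) (α (Fin.last n))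
    have hφ := snocMap_mp n
    have hs : ∀ f : (Fin (n + 1) → ℝ) → ℝ≥0∞, Measurable f → ∀ x : ℝ,
        Measurable fun y : Fin n → ℝ => f (Fin.snoc y x) := fun f hf x =>
      hf.comp (hφ.measurable.comp (measurable_const.prodMk measurable_id))
    have hm : ∀ f : (Fin (n + 1) → ℝ) → ℝ≥0∞, Measurable f → Measurable fun x : ℝ =>
        mixedHerzNormE n (Fin.init α) (Fin.init p) (Fin.init q) fun y => f (Fin.snoc y x) :=
      fun f hf => I.meas ℝ (fun z => f (snocMap n z)) (hf.comp hφ.measurable)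
    refine ⟨?_, ?_, ?_, ?_, ?_⟩
    · intro β _ F hF
      refine H.meas β (fun z => mixedHerzNormE n (Fin.init α) (Fin.init p) (Fin.init q)
        fun y => F (z.1, Fin.snoc y z.2)) ?_
      refine I.meas (β × ℝ) (fun w => F (w.1.1, snocMap n (w.1.2, w.2))) ?_
      refine hF.comp (Measurable.prodMk (by fun_prop) (hφ.measurable.comp (by fun_prop)))
    · intro f hf
      have hset : MeasurableSet {z | f z = 0} := hf (measurableSet_singleton 0)
      rw [mixedHerzNormE, H.zero _ (hm f hf)]
      have h1 : (∀ᵐ z, f z = 0) ↔ ∀ᵐ z ∂(volume.prod volume), f (snocMap n z) = 0 := by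
        rw [← hφ.map_eq, ae_map_iff hφ.aemeasurable hset]
      have h2 : (∀ᵐ z ∂(volume.prod volume), f (snocMap n z) = 0) ↔
          ∀ᵐ x : ℝ, ∀ᵐ y : Fin n → ℝ, f (snocMap n (x, y)) = 0 :=
        Measure.ae_prod_iff_ae_ae (p := fun z => f (snocMap n z) = 0) (hφ.measurable hset)
      refine Iff.trans ?_ (h1.trans h2).symm
      refine Filter.eventually_congr (ae_of_all _ fun x => ?_)
      exact I.zero _ (hs f hf x)
    · intro f g h
      refine H.mono _ _ ?_
      have h1 : ∀ᵐ z ∂(volume.prod volume), g (snocMap n z) ≤ f (snocMap n z) :=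
        hφ.quasiMeasurePreserving.ae h
      filter_upwards [Measure.ae_ae_of_ae_prod h1] with x hx
      exact I.mono _ _ hx
    · intro f hf hmon
      simp only [mixedHerzNormE]
      rw [← H.sup _ (fun m => hm (f m) (hf m))]
      · congr 1
        funext x
        exact I.sup (fun m y => f m (Fin.snoc y x)) (fun m => hs _ (hf m) x)
          (fun m m' h y => hmon h _)
      · intro m m' h x
        exact I.mono _ _ (ae_of_all _ fun y => hmon h _)
    · intro f g hf hg
      refine le_trans (H.mono _ _ (ae_of_all _ fun x => ?_)) (H.add _ _ (hm f hf) (hm g hg))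
      exact I.add _ _ (hs f hf x) (hs g hg x)

def hb (δ : ℝ) (K : ℤ) (k : ℤ) : ℝ≥0∞ := if k ≤ K then hw δ k else 0

lemma hb_sum {δ : ℝ} (hδ : 0 < δ) (K : ℤ) : ∑' k, hb δ K k ≠ ∞ := by
  have inj : Function.Injective (fun j : ℕ => K - (j : ℤ)) := fun a b h => by
    simp only at h; omega
  rw [← inj.tsum_eq]
  · have : ∀ j : ℕ, hb δ K (K - j) = hw δ K * (ENNReal.ofReal ((2:ℝ) ^ (-δ))) ^ j := by
      intro j
      unfold hb hw
      rw [if_pos (by omega), ← ENNReal.ofReal_pow (by positivity),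
        ← ENNReal.ofReal_mul (by positivity), ← Real.rpow_natCast, ← Real.rpow_mul (by norm_num),
        ← Real.rpow_add (by norm_num)]
      congr 2
      push_cast
      ring
    simp only [this]
    rw [ENNReal.tsum_mul_left, ENNReal.tsum_geometric]
    refine ENNReal.mul_ne_top (hw_ne_top _ _) (ENNReal.inv_ne_top.2 ?_)
    refine (tsub_pos_of_lt ?_).ne'
    rw [← ENNReal.ofReal_one]
    exact (ENNReal.ofReal_lt_ofReal_iff one_pos).2
      (Real.rpow_lt_one_of_one_lt_of_neg (by norm_num) (by linarith))
  · intro k hk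
    by_cases h : k ≤ K
    · exact ⟨(K - k).toNat, by simp only; omega⟩
    · exact absurd (by simp [hb, h]) hk

def hI (K : ℤ) : Set ℝ := Set.Ioo (-(2:ℝ) ^ K) ((2:ℝ) ^ K)

lemma mem_hI (K : ℤ) (x : ℝ) : x ∈ hI K ↔ |x| < 2 ^ K := abs_lt.symm

lemma ring_sub {K k : ℤ} {x : ℝ} (h : x ∈ herzRing k) (hx : x ∈ hI K) : k ≤ K := by
  rw [mem_hI] at hx
  rw [mem_herzRing] at h
  have := (zpow_lt_zpow_iff_right₀ (one_lt_two (α := ℝ))).1 (h.2.trans_lt hx)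
  omega

lemma vol_ring (k : ℤ) : volume (herzRing k) ≤ 2 * hw 1 k := by
  refine (measure_mono Set.sdiff_subset).trans ?_
  rw [Real.volume_Ioo, hw, ← ENNReal.ofReal_ofNat 2, ← ENNReal.ofReal_mul (by norm_num)]
  refine ENNReal.ofReal_le_ofReal ?_
  rw [mul_one, Real.rpow_intCast]
  linarith

lemma hw_add (a b : ℝ) (k : ℤ) : hw a k * hw b k = hw (a + b) k := by
  unfold hw
  rw [← ENNReal.ofReal_mul (by positivity), ← Real.rpow_add (by norm_num), mul_add]

lemma hw_rpow (a t : ℝ) (k : ℤ) : hw a k ^ t = hw (a * t) k := by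
  unfold hw
  rw [ENNReal.ofReal_rpow_of_pos (by positivity), ← Real.rpow_mul (by norm_num), mul_assoc]

lemma hb_rpow (δ : ℝ) {t : ℝ} (ht : 0 < t) (K k : ℤ) : hb δ K k ^ t = hb (δ * t) K k := by
  unfold hb
  split_ifs
  · exact hw_rpow _ _ _
  · exact ENNReal.zero_rpow_of_pos ht

lemma vol_ring_rpow (k : ℤ) {t : ℝ} (ht : 0 ≤ t) :
    volume (herzRing k) ^ t ≤ 2 ^ t * hw t k := by
  refine (ENNReal.rpow_le_rpow (vol_ring k) ht).trans ?_
  rw [ENNReal.mul_rpow_of_nonneg _ _ ht, hw_rpow, one_mul]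

lemma herz_ind {p q : ℝ≥0∞} (hp : 1 ≤ p) (hq : 1 ≤ q) {α : ℝ} (hα : -(1 / q).toReal < α)
    (K : ℤ) {c : ℝ≥0∞} (hc : c ≠ ∞) :
    herzNorm1 α p q ((hI K).indicator fun _ => c) ≠ ∞ := by
  have hq' : (1 / q).toReal = 1 / q.toReal := by simp
  rw [hq'] at hα
  set δ := α + 1 / q.toReal with hδ
  have hδ0 : 0 < δ := by linarith
  set D : ℝ≥0∞ := c * 2 ^ (1 / q.toReal) with hD
  have hDt : D ≠ ∞ := ENNReal.mul_ne_top hc (by finiteness)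
  rw [herz_eq hp hq]
  have hle : ∀ k : ℤ, hw α k * eLpNorm ((hI K).indicator fun _ => c) q
      (volume.restrict (herzRing k)) ≤ D * hb δ K k := by
    intro k
    by_cases hk : k ≤ K
    · have h1 : eLpNorm ((hI K).indicator fun _ => c) q (volume.restrict (herzRing k))
          ≤ c * volume (herzRing k) ^ (1 / q.toReal) := by
        refine (eLpNorm_mono_enorm (g := fun _ => c) fun x => ?_).trans ?_
        · exact Set.indicator_le_self' (fun _ _ => zero_le) x
        · by_cases h0 : volume.restrict (herzRing k) = 0
          · simp [h0]
          · rw [eLpNorm_const _ (by positivity) h0]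
            simp
      rw [hb, if_pos hk]
      calc _ ≤ hw α k * (c * (2 ^ (1 / q.toReal) * hw (1 / q.toReal) k)) := by
            gcongr
            exact h1.trans (by gcongr; exact vol_ring_rpow k (by positivity))
        _ = D * (hw α k * hw (1 / q.toReal) k) := by rw [hD]; ring
        _ = _ := by rw [hw_add]
    · have : eLpNorm ((hI K).indicator fun _ => c) q (volume.restrict (herzRing k)) = 0 := by
        rw [eLpNorm_congr_ae (g := fun _ => 0)]
        · simp
        · refine (ae_restrict_iff' (measurableSet_herzRing k)).2 (ae_of_all _ fun x hx => ?_)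
          exact Set.indicator_of_notMem (fun h => hk (ring_sub hx h)) _
      simp [this]
  refine ne_top_of_le_ne_top ?_ (eLpNorm_mono_enorm (g := fun k => D * hb δ K k) hle)
  rcases eq_or_ne p ∞ with rfl | h
  · rw [eLp_top, essSup_count]
    refine ne_top_of_le_ne_top (ENNReal.mul_ne_top hDt (hb_sum hδ0 K)) (iSup_le fun k => ?_)
    gcongr
    exact ENNReal.le_tsum k
  · have hp0 : 0 < p.toReal := ENNReal.toReal_pos (by positivity) h
    rw [eLp_fin _ hp h, lintegral_count]
    refine ENNReal.rpow_ne_top_of_nonneg (by positivity) ?_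
    simp only [ENNReal.mul_rpow_of_nonneg _ _ hp0.le, hb_rpow _ hp0]
    rw [ENNReal.tsum_mul_left]
    exact ENNReal.mul_ne_top (by finiteness) (hb_sum (by positivity) K)

lemma herz_L1 {p q : ℝ≥0∞} (hp : 1 ≤ p) (hq : 1 ≤ q) {α : ℝ} (hα : α < 1 - (1 / q).toReal)
    (K : ℤ) : ∃ C : ℝ≥0∞, C ≠ ∞ ∧ ∀ g : ℝ → ℝ≥0∞, Measurable g →
      ∫⁻ x in hI K, g x ≤ C * herzNorm1 α p q g := by
  have hq' : (1 / q).toReal = 1 / q.toReal := by simp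
  rw [hq'] at hα
  set t := 1 - 1 / q.toReal with ht
  have ht0 : 0 ≤ t := by
    rw [ht, sub_nonneg, ← hq']
    refine ENNReal.toReal_le_of_le_ofReal zero_le_one ?_
    simpa using hq
  refine ⟨2 ^ t * ∑' k, hb (t - α) K k,
    ENNReal.mul_ne_top (by finiteness) (hb_sum (by linarith) K), fun g hg => ?_⟩
  have cov : hI K ≤ᵐ[volume] ⋃ k, (if k ≤ K then herzRing k else ∅) := by
    have h2 : ∀ᵐ x : ℝ, x ≠ 0 := by simp [ae_iff]
    filter_upwards [h2] with x h0 hx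
    obtain ⟨k, hk⟩ := exists_herzRing h0
    refine Set.mem_iUnion.2 ⟨k, ?_⟩
    rw [if_pos (ring_sub hk hx)]
    exact hk
  calc ∫⁻ x in hI K, g x ≤ ∫⁻ x in ⋃ k, (if k ≤ K then herzRing k else ∅), g x :=
        lintegral_mono_set' cov
    _ ≤ ∑' k, ∫⁻ x in (if k ≤ K then herzRing k else ∅), g x := lintegral_iUnion_le _ _
    _ ≤ ∑' k, (2 ^ t * hb (t - α) K k * herzNorm1 α p q g) := by
        refine ENNReal.tsum_le_tsum fun k => ?_
        by_cases hk : k ≤ K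
        · rw [if_pos hk, hb, if_pos hk]
          have h1 : ∫⁻ x in herzRing k, g x ≤
              eLpNorm g q (volume.restrict (herzRing k)) * volume (herzRing k) ^ t := by
            have := eLpNorm_le_eLpNorm_mul_rpow_measure_univ
              (μ := volume.restrict (herzRing k)) hq hg.aestronglyMeasurable
            rw [eLpNorm_one_eq_lintegral_enorm] at this
            simpa [ht] using this
          have h2 : hw α k * eLpNorm g q (volume.restrict (herzRing k)) ≤
              herzNorm1 α p q g := by
            rw [herz_eq hp hq]
            set a := (fun k : ℤ => hw α k * eLpNorm g q (volume.restrict (herzRing k)))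
            change a k ≤ _
            rcases eq_or_ne p ∞ with rfl | h
            · rw [eLp_top, essSup_count]
              exact le_iSup a k
            · have hp0 : 0 < p.toReal := ENNReal.toReal_pos (by positivity) h
              rw [eLp_fin _ hp h, lintegral_count, one_div, ENNReal.le_rpow_inv_iff hp0]
              exact ENNReal.le_tsum (f := fun k => a k ^ p.toReal) k
          have h3 : hw t k = hw (t - α) k * hw α k := by rw [hw_add]; simp
          calc _ ≤ _ := h1
            _ ≤ eLpNorm g q (volume.restrict (herzRing k)) * (2 ^ t * hw t k) := by
              gcongr; exact vol_ring_rpow k ht0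
            _ = 2 ^ t * hw (t - α) k *
                (hw α k * eLpNorm g q (volume.restrict (herzRing k))) := by rw [h3]; ring
            _ ≤ _ := by gcongr
        · simp [hk]
    _ = _ := by rw [ENNReal.tsum_mul_right, ENNReal.tsum_mul_left]

def hQ (n : ℕ) (K : ℤ) : Set (Fin n → ℝ) := {y | ∀ i, y i ∈ hI K}

lemma measurableSet_hI (K : ℤ) : MeasurableSet (hI K) := measurableSet_Ioo

lemma measurableSet_hQ (n : ℕ) (K : ℤ) : MeasurableSet (hQ n K) := by
  have : hQ n K = ⋂ i, (fun y : Fin n → ℝ => y i) ⁻¹' hI K := by ext y; simp [hQ]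
  rw [this]
  exact MeasurableSet.iInter fun i => measurable_pi_apply i (measurableSet_hI K)

lemma snoc_mem_hQ (n : ℕ) (K : ℤ) (x : ℝ) (y : Fin n → ℝ) :
    (Fin.snoc y x : Fin (n + 1) → ℝ) ∈ hQ (n + 1) K ↔ x ∈ hI K ∧ y ∈ hQ n K := by
  change (∀ i : Fin (n + 1), (Fin.snoc y x : Fin (n + 1) → ℝ) i ∈ hI K) ↔
    x ∈ hI K ∧ ∀ i, y i ∈ hI K
  rw [Fin.forall_fin_succ']
  simp [and_comm]

lemma mixed_ind (K : ℤ) : ∀ (n : ℕ) (α : Fin n → ℝ) (p q : Fin n → ℝ≥0∞)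
    (_ : ∀ i, 1 ≤ p i) (_ : ∀ i, 1 ≤ q i) (_ : ∀ i, -(1 / q i).toReal < α i),
    mixedHerzNormE n α p q ((hQ n K).indicator fun _ => 1) ≠ ∞
  | 0, α, p, q, _, _, _ => by
    rw [mixedHerzNormE]
    refine ne_top_of_le_ne_top ENNReal.one_ne_top
      (Set.indicator_le_self' (fun _ _ => zero_le) _)
  | n + 1, α, p, q, hp, hq, hα => by
    have I := mixed_ind K n (Fin.init α) (Fin.init p) (Fin.init q)
      (fun i => hp _) (fun i => hq _) (fun i => hα _)
    have G := goodNorm_mixed n (Fin.init α) (Fin.init p) (Fin.init q)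
      (fun i => hp _) (fun i => hq _)
    have H := herz_ind (hp (Fin.last n)) (hq (Fin.last n)) (hα (Fin.last n)) K I
    rw [mixedHerzNormE]
    convert H using 3 with x
    by_cases hx : x ∈ hI K
    · rw [Set.indicator_of_mem hx]
      congr 1
      funext y
      by_cases hy : y ∈ hQ n K
      · rw [Set.indicator_of_mem hy, Set.indicator_of_mem ((snoc_mem_hQ n K x y).2 ⟨hx, hy⟩)]
      · rw [Set.indicator_of_notMem hy,
          Set.indicator_of_notMem fun h => hy ((snoc_mem_hQ n K x y).1 h).2]
    · rw [Set.indicator_of_notMem hx]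
      have : (fun y : Fin n → ℝ => (hQ (n + 1) K).indicator (fun _ => (1 : ℝ≥0∞))
          (Fin.snoc y x)) = fun _ => 0 := by
        funext y
        exact Set.indicator_of_notMem (fun h => hx ((snoc_mem_hQ n K x y).1 h).1) _
      rw [this, G.zero _ measurable_const]
      rfl

lemma mixed_L1 (K : ℤ) : ∀ (n : ℕ) (α : Fin n → ℝ) (p q : Fin n → ℝ≥0∞)
    (_ : ∀ i, 1 ≤ p i) (_ : ∀ i, 1 ≤ q i) (_ : ∀ i, α i < 1 - (1 / q i).toReal),
    ∃ C : ℝ≥0∞, C ≠ ∞ ∧ ∀ f : (Fin n → ℝ) → ℝ≥0∞, Measurable f →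
      ∫⁻ x in hQ n K, f x ≤ C * mixedHerzNormE n α p q f
  | 0, α, p, q, _, _, _ => by
    refine ⟨1, ENNReal.one_ne_top, fun f _ => ?_⟩
    rw [mixedHerzNormE, one_mul]
    refine (setLIntegral_le_lintegral _ _).trans ?_
    have : f = fun _ => f fun i => i.elim0 := by
      funext x
      rw [Subsingleton.elim x (fun i : Fin 0 => i.elim0)]
    rw [this, lintegral_const, volume_pi, Measure.pi_empty_univ, mul_one]
  | n + 1, α, p, q, hp, hq, hα => by
    obtain ⟨C, hC, I⟩ := mixed_L1 K n (Fin.init α) (Fin.init p) (Fin.init q)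
      (fun i => hp _) (fun i => hq _) (fun i => hα _)
    have G := goodNorm_mixed n (Fin.init α) (Fin.init p) (Fin.init q)
      (fun i => hp _) (fun i => hq _)
    obtain ⟨C', hC', H⟩ := herz_L1 (hp (Fin.last n)) (hq (Fin.last n)) (hα (Fin.last n)) K
    refine ⟨C * C', ENNReal.mul_ne_top hC hC', fun f hf => ?_⟩
    have hφ := snocMap_mp n
    have hm : Measurable fun x : ℝ =>
        mixedHerzNormE n (Fin.init α) (Fin.init p) (Fin.init q) fun y => f (Fin.snoc y x) :=
      G.meas ℝ (fun z => f (snocMap n z)) (hf.comp hφ.measurable)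
    have hpre : snocMap n ⁻¹' hQ (n + 1) K = hI K ×ˢ hQ n K := by
      ext ⟨x, y⟩
      exact snoc_mem_hQ n K x y
    calc ∫⁻ x in hQ (n + 1) K, f x
        = ∫⁻ z in hI K ×ˢ hQ n K, f (snocMap n z) ∂(volume.prod volume) := by
          rw [← hpre, hφ.setLIntegral_comp_preimage (measurableSet_hQ _ _) hf]
      _ = ∫⁻ x in hI K, ∫⁻ y in hQ n K, f (snocMap n (x, y)) := by
          rw [← Measure.prod_restrict]
          exact lintegral_prod _ (hf.comp hφ.measurable).aemeasurable
      _ ≤ ∫⁻ x in hI K, C * mixedHerzNormE n (Fin.init α) (Fin.init p) (Fin.init q)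
            fun y => f (Fin.snoc y x) := by
          refine lintegral_mono fun x => I _ ?_
          exact hf.comp (hφ.measurable.comp (measurable_const.prodMk measurable_id))
      _ = C * ∫⁻ x in hI K, mixedHerzNormE n (Fin.init α) (Fin.init p) (Fin.init q)
            fun y => f (Fin.snoc y x) := lintegral_const_mul _ hm
      _ ≤ C * (C' * mixedHerzNormE (n + 1) α p q f) := by
          gcongr
          exact H _ hm
      _ = _ := by rw [mul_assoc]

lemma eucBall_sub_hQ (n : ℕ) (x : Fin n → ℝ) (r : ℝ) (hr : 0 < r) :
    ∃ K : ℤ, eucBall n x r ⊆ hQ n K := by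
  obtain ⟨m, hm⟩ := pow_unbounded_of_one_lt (r + ∑ i, |x i|) (one_lt_two (α := ℝ))
  refine ⟨m, fun y hy i => ?_⟩
  rw [mem_hI, zpow_natCast]
  refine lt_of_le_of_lt ?_ hm
  have h1 : (y i - x i) ^ 2 < r ^ 2 :=
    lt_of_le_of_lt (Finset.single_le_sum (f := fun i => (y i - x i) ^ 2)
      (fun j _ => sq_nonneg _) (Finset.mem_univ i)) hy
  have h2 : |y i - x i| < r := abs_lt_of_sq_lt_sq h1 hr.le
  have h3 : |x i| ≤ ∑ i, |x i| := Finset.single_le_sum (f := fun i => |x i|)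
      (fun j _ => abs_nonneg _) (Finset.mem_univ i)
  have h4 : |y i| ≤ |y i - x i| + |x i| := by
    simpa using abs_add_le (y i - x i) (x i)
  linarith

/-- `Ė^{α,p}_q(ℝⁿ)` is a ball Banach function space. -/
theorem mixedHerz_isBallBanach (n : ℕ) (p q : Fin n → ℝ≥0∞) (α : Fin n → ℝ)
    (hp : ∀ i, 1 ≤ p i) (hq : ∀ i, 1 ≤ q i)
    (hα : ∀ i, -(1 / q i).toReal < α i ∧ α i < 1 - (1 / q i).toReal) :
    IsBallBanachNorm n (mixedHerzNormE n α p q) := by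
  have G := goodNorm_mixed n α p q hp hq
  refine ⟨⟨fun f hf h => (G.zero f hf).1 h, fun f g _ _ h => G.mono f g h, ?_, ?_⟩, G.add, ?_⟩
  · intro fm f hfm hf h
    have hmono : Monotone fun m => mixedHerzNormE n α p q (fm m) := fun m m' hmm =>
      G.mono _ _ (h.mono fun x hx => hx.1 hmm)
    refine ⟨hmono, ?_⟩
    -- replace the sequence by its running supremum
    let F : ℕ → (Fin n → ℝ) → ℝ≥0∞ := fun m x => ⨆ j : {j : ℕ // j ≤ m}, fm j x
    have hF : ∀ m, Measurable (F m) := fun m => Measurable.iSup fun j => hfm j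
    have hFm : Monotone F := fun m m' hmm x =>
      iSup_le fun j => le_iSup (fun j : {j : ℕ // j ≤ m'} => fm j x) ⟨j.1, j.2.trans hmm⟩
    have hFe : ∀ᵐ x, ∀ m, F m x = fm m x := h.mono fun x hx m =>
      le_antisymm (iSup_le fun j => hx.1 j.2)
        (le_iSup (fun j : {j : ℕ // j ≤ m} => fm j x) ⟨m, le_rfl⟩)
    have e1 : ∀ m, mixedHerzNormE n α p q (fm m) = mixedHerzNormE n α p q (F m) := fun m =>
      le_antisymm (G.mono _ _ (hFe.mono fun x hx => (hx m).ge))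
        (G.mono _ _ (hFe.mono fun x hx => (hx m).le))
    have e3 : ∀ᵐ x, f x = ⨆ m, F m x := by
      filter_upwards [h, hFe] with x hx hx'
      simp only [hx']
      exact tendsto_nhds_unique hx.2 (tendsto_atTop_iSup hx.1)
    have e2 : mixedHerzNormE n α p q f = ⨆ m, mixedHerzNormE n α p q (fm m) := by
      simp only [e1]
      rw [← G.sup F hF hFm]
      exact le_antisymm (G.mono _ _ (e3.mono fun x hx => hx.le))
        (G.mono _ _ (e3.mono fun x hx => hx.ge))
    rw [e2]
    exact tendsto_atTop_iSup hmono
  · intro x r hr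
    obtain ⟨K, hK⟩ := eucBall_sub_hQ n x r hr
    refine ne_top_of_le_ne_top (mixed_ind K n α p q hp hq fun i => (hα i).1)
      (G.mono _ _ (ae_of_all _ fun y => ?_))
    exact Set.indicator_le_indicator_of_subset hK (fun _ => zero_le) y
  · intro x r hr
    obtain ⟨K, hK⟩ := eucBall_sub_hQ n x r hr
    obtain ⟨C, hC, h⟩ := mixed_L1 K n α p q hp hq fun i => (hα i).2
    refine ⟨C + 1, by positivity, by finiteness, fun f hf => ?_⟩
    calc _ ≤ _ := lintegral_mono_set hK
      _ ≤ _ := h f hf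
      _ ≤ _ := by gcongr; exact le_self_add
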